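/- arXiv:2212.08644 — 2 statements merged into one kernel-verified Lean document; each statement's English description precedes it below -/
import Mathlib

section
/- Let (A, I) be a Henselian pair and let B be an A-algebra which is hfp over A with respect to I. If the induced ring map A/I → B/(I·B) is surjective, then the structure map A → B is surjective. -/
universe u

/-- A ring homomorphism `ρ : R →+* H` exhibits `H` as a Henselization of the pair `(R, K)`:
`(H, K·H)` is a Henselian pair, and every map from `(R, K)` to a Henselian pair factors
uniquely through `ρ`. -/
def IsHenselization {R H : Type u} [CommRing R] [CommRing H]
    (K : Ideal R) (ρ : R →+* H) : Prop :=
  HenselianRing H (K.map ρ) ∧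
    ∀ (C : Type u) [CommRing C] (J : Ideal C), HenselianRing C J →
      ∀ f : R →+* C, K.map f ≤ J → ∃! g : H →+* C, g.comp ρ = f

/-- `φ : A →+* B` is Henselian finitely presented (hfp) with respect to `I`:
`B` is a Henselization of `(R, I·R)` for some finitely presented `A`-algebra `R`. -/
def IsHfp {A B : Type u} [CommRing A] [CommRing B] (φ : A →+* B) (I : Ideal A) : Prop :=
  ∃ (R : Type u) (_ : CommRing R) (ψ : A →+* R) (ρ : R →+* B),
    ψ.FinitePresentation ∧ ρ.comp ψ = φ ∧ IsHenselization (I.map ψ) ρ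

/-- `φ : A →+* B` is h-formally étale with respect to `I`. -/
def IsHFormallyEtale {A B : Type u} [CommRing A] [CommRing B] (φ : A →+* B) (I : Ideal A) :
    Prop :=
  ∀ (E C : Type u) [CommRing E] [CommRing C] (e : A →+* E) (c : A →+* C)
    (p : E →+* C) (u : B →+* C),
    p.comp e = c → u.comp φ = c →
    (∃ N : ℕ, 1 ≤ N ∧ Ideal.map e (I ^ N) = ⊥ ∧ Ideal.map c (I ^ N) = ⊥) →
    Function.Surjective p →
    (∃ M : ℕ, 1 ≤ M ∧ RingHom.ker p ^ M = ⊥) →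
    ∃! v : B →+* E, v.comp φ = e ∧ p.comp v = u

/-- `φ : A →+* B` is h-formally smooth with respect to `I`. -/
def IsHFormallySmooth {A B : Type u} [CommRing A] [CommRing B] (φ : A →+* B) (I : Ideal A) :
    Prop :=
  ∀ (E C : Type u) [CommRing E] [CommRing C] (e : A →+* E) (c : A →+* C)
    (p : E →+* C) (u : B →+* C),
    p.comp e = c → u.comp φ = c →
    (∃ N : ℕ, 1 ≤ N ∧ Ideal.map e (I ^ N) = ⊥ ∧ Ideal.map c (I ^ N) = ⊥) →
    Function.Surjective p →
    (∃ M : ℕ, 1 ≤ M ∧ RingHom.ker p ^ M = ⊥) →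
    ∃ v : B →+* E, v.comp φ = e ∧ p.comp v = u

/-- `φ : A →+* B` is h-étale with respect to `I`: `B` is a Henselization of `(R, I·R)`
for some étale `A`-algebra `R`. -/
def IsHEtale {A B : Type u} [CommRing A] [CommRing B] (φ : A →+* B) (I : Ideal A) : Prop :=
  ∃ (R : Type u) (_ : CommRing R) (_ : Algebra A R) (ρ : R →+* B),
    Algebra.Etale A R ∧ ρ.comp (algebraMap A R) = φ ∧
      IsHenselization (I.map (algebraMap A R)) ρ

/-- `φ : A →+* B` is h-smooth with respect to `I`: `B` is a Henselization of `(R, I·R)`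
for some smooth `A`-algebra `R`. -/
def IsHSmooth {A B : Type u} [CommRing A] [CommRing B] (φ : A →+* B) (I : Ideal A) : Prop :=
  ∃ (R : Type u) (_ : CommRing R) (_ : Algebra A R) (ρ : R →+* B),
    Algebra.Smooth A R ∧ ρ.comp (algebraMap A R) = φ ∧
      IsHenselization (I.map (algebraMap A R)) ρ

/-- A ring homomorphism is flat if it makes the target into a flat module over the source. -/
def RingHomFlat {A C : Type u} [CommRing A] [CommRing C] (f : A →+* C) : Prop :=
  letI := f.toAlgebra
  Module.Flat A C

/-- A ring homomorphism is smooth if it makes the target into a smooth algebra over the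
source (smooth = formally smooth + finitely presented). -/
def RingHomSmooth {A C : Type u} [CommRing A] [CommRing C] (f : A →+* C) : Prop :=
  letI := f.toAlgebra
  Algebra.Smooth A C

/-- A ring homomorphism is étale if it makes the target into an étale algebra over the
source (étale = formally étale + finitely presented). -/
def RingHomEtale {A C : Type u} [CommRing A] [CommRing C] (f : A →+* C) : Prop :=
  letI := f.toAlgebra
  Algebra.Etale A C

/-!
Let `B` be the Henselization of `(R, IR)`. Since `B/IB` maps onto `R/IR`, so does `A`, and
Zariski's main theorem applies at all primes of `R` containing `IR`. It provides a finite subalgebra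
`T` of `R` and some `s ∈ T` with `s ≡ 1` modulo `IR` and `T[1/s] = R[1/s]`.

Modulo `I`, the algebra `T` splits into the factor `R/IR`, on which `s = 1`, and a complement on
which `s` is nilpotent. As `A` maps onto the first factor, `s ^ N * T ⊆ A[s] + I * T` for large `N`,
and the Cayley–Hamilton theorem on `T/A[s]` yields a monic `P ∈ A[X]` with `P(s) = 0` and
`P ≡ X ^ n * (X - 1)` modulo `I`. The simple root `1` of `P` modulo `I` lifts to a root `a ∈ A`. As
`IB` lies in the Jacobson radical of `B`, there is only one root of `P` near `1` in `B`, so `a`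
and `s` have the same image there. Nakayama's lemma then puts the image of `T`, hence that of `R`,
inside the image of `A`.

The image of `A` in `B` is itself Henselian, being a quotient of `A`. Hence by the universal
property of the Henselization it must be all of `B`.
-/

open Polynomial

section HenselianRing

variable {A : Type*} [CommRing A] {I : Ideal A}

theorem isUnit_of_sub_mem_of_le_jacobson_bot (hI : I ≤ Ideal.jacobson ⊥) {x y : A}
    (hx : IsUnit x) (hxy : x - y ∈ I) : IsUnit y := by
  have := isLocalHom_of_le_jacobson_bot I hI
  refine isUnit_of_map_unit (Ideal.Quotient.mk I) y ?_
  exact Ideal.Quotient.eq.mpr hxy ▸ hx.map (Ideal.Quotient.mk I)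

theorem isUnit_eval_of_sub_mem (hI : I ≤ Ideal.jacobson ⊥) {f : A[X]} {x y : A}
    (hx : IsUnit (Ideal.Quotient.mk I (f.eval x))) (hxy : y - x ∈ I) : IsUnit (f.eval y) := by
  have := isLocalHom_of_le_jacobson_bot I hI
  refine isUnit_of_map_unit (Ideal.Quotient.mk I) _ ?_
  rwa [Ideal.Quotient.eq.mpr (I.mem_of_dvd (sub_dvd_eval_sub y x f) hxy)]

theorem eq_of_isRoot_of_sub_mem_jacobson_bot {f : A[X]} {x y : A} (hx : f.IsRoot x)
    (hy : f.IsRoot y) (hxy : y - x ∈ Ideal.jacobson (⊥ : Ideal A))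
    (hf : IsUnit (f.derivative.eval x)) : y = x := by
  obtain ⟨c, hc⟩ := exists_mul_sq_add_linear_part_eq_eval_add f x (y - x)
  rw [add_sub_cancel, hx.eq_zero, hy.eq_zero] at hc
  have hu : IsUnit (f.derivative.eval x + c * (y - x)) :=
    isUnit_of_sub_mem_of_le_jacobson_bot le_rfl hf <| by
      simpa using Ideal.mul_mem_left _ (-c) hxy
  exact sub_eq_zero.mp (hu.mul_right_eq_zero.mp (by linear_combination hc))

theorem exists_algebraMap_eq_of_aeval_eq_zero [HenselianRing A I] {B : Type*} [CommRing B]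
    [Algebra A B] (hB : I.map (algebraMap A B) ≤ Ideal.jacobson ⊥) {f : A[X]} (hf : f.Monic)
    {a₀ : A} (ha₀ : f.eval a₀ ∈ I) (hf' : IsUnit (Ideal.Quotient.mk I (f.derivative.eval a₀)))
    {b : B} (hb : aeval b f = 0) (hba₀ : b - algebraMap A B a₀ ∈ I.map (algebraMap A B)) :
    ∃ a : A, a - a₀ ∈ I ∧ algebraMap A B a = b := by
  obtain ⟨a, ha, haa₀⟩ := HenselianRing.is_henselian f hf a₀ ha₀ hf'
  refine ⟨a, haa₀, (eq_of_isRoot_of_sub_mem_jacobson_bot (f := f.map (algebraMap A B))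
    (ha.map) (by rwa [IsRoot, eval_map_algebraMap]) (hB ?_) ?_).symm⟩
  · rw [← sub_sub_sub_cancel_right b _ (algebraMap A B a₀), ← map_sub]
    exact sub_mem hba₀ (Ideal.mem_map_of_mem _ haa₀)
  · rw [derivative_map, eval_map_algebraMap, aeval_algebraMap_apply, coe_aeval_eq_eval]
    exact (isUnit_eval_of_sub_mem HenselianRing.jac hf' haa₀).map _

theorem eval_one_mem_of_map_eq {P : A[X]} {n : ℕ}
    (hP : P.map (Ideal.Quotient.mk I) = X ^ n * (X - 1)) : P.eval 1 ∈ I := by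
  rw [← Ideal.Quotient.eq_zero_iff_mem, ← eval₂_at_apply, ← eval_map, hP]
  simp

theorem mk_derivative_eval_one_of_map_eq {P : A[X]} {n : ℕ}
    (hP : P.map (Ideal.Quotient.mk I) = X ^ n * (X - 1)) :
    Ideal.Quotient.mk I (P.derivative.eval 1) = 1 := by
  rw [← eval₂_at_apply, ← eval_map, ← derivative_map, hP]
  simp

-- The reciprocal of a solution is a root near `1` of `X ^ (d + 2) - X ^ (d + 1) + c * h.reverse`,
-- which is monic even though the original equation is not.
theorem exists_one_sub_add_mul_eval_eq_zero [HenselianRing A I] {c : A} (hc : c ∈ I) (h : A[X]) :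
    ∃ y : A, 1 - y + c * y ^ 2 * h.eval y = 0 := by
  nontriviality A
  set d := h.natDegree
  let P : A[X] := X ^ (d + 2) + (C c * h.reverse - X ^ (d + 1))
  have hdeg : (C c * h.reverse - X ^ (d + 1)).degree < ((d + 2 : ℕ) : WithBot ℕ) := by
    refine (degree_le_of_natDegree_le (natDegree_sub_le_of_le (m := d + 1) ?_
      (natDegree_X_pow_le _))).trans_lt (by simp [-Nat.cast_add])
    exact (natDegree_C_mul_le c _).trans ((reverse_natDegree_le h).trans d.le_succ)
  have hP : P.map (Ideal.Quotient.mk I) = X ^ (d + 1) * (X - 1) := by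
    simp only [P, Polynomial.map_add, Polynomial.map_sub, Polynomial.map_mul, Polynomial.map_pow,
      map_X, map_C, Ideal.Quotient.eq_zero_iff_mem.mpr hc, map_zero, zero_mul, zero_sub]
    ring
  obtain ⟨z, hz, hz1⟩ := HenselianRing.is_henselian (I := I) P (monic_X_pow_add hdeg) 1
    (eval_one_mem_of_map_eq hP) (by simp [mk_derivative_eval_one_of_map_eq hP])
  obtain ⟨u, rfl⟩ : IsUnit z := isUnit_of_sub_mem_of_le_jacobson_bot HenselianRing.jac isUnit_one
    (sub_mem_comm_iff.mp hz1)
  refine ⟨↑u⁻¹, ?_⟩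
  have hrev : h.eval (↑u⁻¹ : A) = h.reverse.eval (u : A) * ↑u⁻¹ ^ d :=
    let _ : Invertible (↑u⁻¹ : A) := ⟨u, u.mul_inv, u.inv_mul⟩
    (eval₂_reverse_mul_pow (RingHom.id A) (↑u⁻¹ : A) h).symm
  have hroot : (u : A) ^ (d + 2) + (c * h.reverse.eval (u : A) - u ^ (d + 1)) = 0 := by
    simpa [P] using hz
  have hpow (n : ℕ) : (u : A) ^ n * ↑u⁻¹ ^ n = 1 := by rw [← mul_pow, u.mul_inv, one_pow]
  rw [hrev]
  linear_combination (↑u⁻¹ : A) ^ (d + 2) * hroot - hpow (d + 2) + (↑u⁻¹ : A) * hpow (d + 1)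

theorem exists_forall_eval_add_mul_eq (f : A[X]) (a b : A) :
    ∃ g : A[X], ∀ y, f.eval (a + b * y) =
      f.eval a + f.derivative.eval a * (b * y) + (b * y) ^ 2 * g.eval y := by
  obtain ⟨g, hg⟩ := binomExpansion (f.map C) (C a) (C b * X)
  refine ⟨g, fun y ↦ ?_⟩
  have hcomp : (f.map C).eval (C a + C b * X) = f.comp (C a + C b * X) := eval_map C _
  rw [hcomp, derivative_map, eval_map_apply, eval_map_apply] at hg
  simpa [eval_comp, mul_comm (g.eval y)] using congrArg (eval y) hg

-- Unlike the definition, this criterion does not involve monic polynomials, and its hypothesis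
-- passes to quotients by lifting `c` and `h` arbitrarily.
theorem henselianRing_of_forall_exists (hI : I ≤ Ideal.jacobson ⊥)
    (H : ∀ c ∈ I, ∀ h : A[X], ∃ y : A, 1 - y + c * y ^ 2 * h.eval y = 0) :
    HenselianRing A I where
  jac := hI
  is_henselian f _ a₀ ha₀ hf' := by
    obtain ⟨v, hv⟩ := (isUnit_eval_of_sub_mem hI hf'
      (by simp : a₀ - a₀ ∈ I)).exists_right_inv
    obtain ⟨g, hg⟩ := exists_forall_eval_add_mul_eq f a₀ (-(f.eval a₀ * v))
    obtain ⟨y, hy⟩ := H _ ha₀ (C (v ^ 2) * g)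
    rw [eval_C_mul] at hy
    refine ⟨a₀ + -(f.eval a₀ * v) * y, ?_, ?_⟩
    · rw [IsRoot, hg]
      linear_combination f.eval a₀ * hy - f.eval a₀ * y * hv
    · rw [add_sub_cancel_left, neg_mul, mul_assoc, neg_mem_iff]
      exact I.mul_mem_right _ ha₀

theorem henselianRing_bot : HenselianRing A (⊥ : Ideal A) where
  jac := bot_le
  is_henselian f _ a h _ := ⟨a, h, by simp⟩

theorem henselianRing_map_of_surjective {B : Type*} [CommRing B] [HenselianRing A I] {f : A →+* B}
    (hf : Function.Surjective f) : HenselianRing B (I.map f) := by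
  refine henselianRing_of_forall_exists ?_ fun b hb h ↦ ?_
  · rw [Ideal.map_le_iff_le_comap, Ideal.comap_jacobson_of_surjective hf]
    exact HenselianRing.jac.trans (Ideal.jacobson_mono bot_le)
  · obtain ⟨c, hc, rfl⟩ := (Ideal.mem_map_iff_of_surjective f hf).mp hb
    obtain ⟨h, rfl⟩ := map_surjective f hf h
    obtain ⟨y, hy⟩ := exists_one_sub_add_mul_eval_eq_zero hc h
    exact ⟨f y, by simpa [eval_map_apply] using congrArg f hy⟩

end HenselianRing

section CayleyHamilton

variable {A T : Type*} [CommRing A] [CommRing T] [Algebra A T] {I : Ideal A}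

theorem map_mem_smul_top_of_mem_map {M : Type*} [AddCommGroup M] [Module A M] (f : T →ₗ[A] M)
    {z : T} (hz : z ∈ I.map (algebraMap A T)) : f z ∈ I • LinearMap.range f := by
  rw [LinearMap.range_eq_map, ← Submodule.map_smul'', Ideal.smul_top_eq_map]
  exact Submodule.mem_map_of_mem hz

theorem map_mk_eq_X_pow_of_coeff_mem_pow {q : A[X]} (hq : q.Monic)
    (hcoeff : ∀ k, q.coeff k ∈ I ^ (q.natDegree - k)) :
    q.map (Ideal.Quotient.mk I) = X ^ q.natDegree := by
  ext k
  rw [coeff_map, coeff_X_pow]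
  split_ifs with hk
  · rw [hk, hq.coeff_natDegree, map_one]
  rw [Ideal.Quotient.eq_zero_iff_mem]
  rcases lt_or_gt_of_ne hk with hk | hk
  · exact Ideal.pow_le_self (Nat.sub_ne_zero_of_lt hk) (hcoeff k)
  · exact coeff_eq_zero_of_natDegree_lt hk ▸ I.zero_mem

theorem exists_monic_map_eq_X_pow_aeval_mul_mem [Module.Finite A T] (S : Subalgebra A T) {e : T}
    (he : e ∈ S) (h : ∀ x, ∃ y ∈ S, e * x - y ∈ I.map (algebraMap A T)) :
    ∃ (q : A[X]) (n : ℕ), q.Monic ∧ q.map (Ideal.Quotient.mk I) = X ^ n ∧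
      ∀ x, aeval e q * x ∈ S := by
  let π : T →ₗ[S] T ⧸ (1 : Submodule S T) := Submodule.mkQ 1
  let φ : S →ₐ[A] Module.End A (T ⧸ (1 : Submodule S T)) := Algebra.lsmul A A _
  have hπ (y : T) : π y = 0 ↔ y ∈ S := by
    simp [π, Submodule.mem_one]
  have hφ : LinearMap.range (φ ⟨e, he⟩) ≤ I • ⊤ := by
    rintro _ ⟨x, rfl⟩
    obtain ⟨x, rfl⟩ := Submodule.mkQ_surjective _ x
    obtain ⟨y, hy, hxy⟩ := h x
    have hex : φ ⟨e, he⟩ (π x) = π (e * x - y) := by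
      rw [map_sub, (hπ y).mpr hy, sub_zero]
      rfl
    change φ ⟨e, he⟩ (π x) ∈ _
    exact hex ▸ Submodule.smul_mono le_rfl le_top
      (map_mem_smul_top_of_mem_map (π.restrictScalars A) hxy)
  obtain ⟨q, hq, -, hcoeff, hzero⟩ :=
    LinearMap.exists_monic_and_natDegree_eq_and_coeff_mem_pow_and_aeval_eq_zero A _ I hφ
  refine ⟨q, q.natDegree, hq, map_mk_eq_X_pow_of_coeff_mem_pow hq hcoeff, fun x ↦ ?_⟩
  have hx : π (aeval e q * x) = φ (aeval ⟨e, he⟩ q) (π x) := by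
    rw [show aeval e q = S.val (aeval ⟨e, he⟩ q) from aeval_algHom_apply S.val (⟨e, he⟩ : S) q]
    rfl
  rw [← hπ, hx, ← aeval_algHom_apply, hzero, LinearMap.zero_apply]

theorem exists_map_eq_zero_aeval_eq_of_mem_smul {s z : T}
    (hz : z ∈ I • LinearMap.range (aeval (R := A) s).toLinearMap) :
    ∃ h : A[X], h.map (Ideal.Quotient.mk I) = 0 ∧ aeval s h = z := by
  rw [LinearMap.range_eq_map, ← Submodule.map_smul'', Ideal.smul_top_eq_map] at hz
  obtain ⟨h, hh, rfl⟩ := hz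
  refine ⟨h, ?_, rfl⟩
  rw [← coe_mapRingHom, ← RingHom.mem_ker, ker_mapRingHom, Ideal.mk_ker]
  exact hh

theorem exists_monic_map_eq_aeval_eq_zero [Module.Finite A T] {s : T} {N : ℕ} (hN : N ≠ 0)
    (hs : s ^ N * (s - 1) ∈ I.map (algebraMap A T))
    (hT : ∀ x, ∃ a : A, s ^ N * (x - algebraMap A T a) ∈ I.map (algebraMap A T)) :
    ∃ (P : A[X]) (n : ℕ), P.Monic ∧ P.map (Ideal.Quotient.mk I) = X ^ n * (X - 1) ∧
      aeval s P = 0 := by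
  obtain ⟨q, n, hq, hqI, hqS⟩ := exists_monic_map_eq_X_pow_aeval_mul_mem (I := I)
    (aeval (R := A) s).range (e := s ^ N) ⟨X ^ N, by simp⟩ fun x ↦ by
      obtain ⟨a, ha⟩ := hT x
      exact ⟨s ^ N * algebraMap A T a, ⟨X ^ N * C a, by simp [mul_comm (s ^ N)]⟩,
        mul_sub (s ^ N) _ _ ▸ ha⟩
  obtain ⟨p, hp, hps⟩ : IsIntegral A s := Algebra.IsIntegral.isIntegral s
  let F := expand A N q * (X ^ N * (X - 1))
  have hF : F.Monic := (hq.expand (Nat.pos_of_ne_zero hN)).mul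
    ((monic_X_pow _).mul (monic_X_sub_C 1))
  let G := X ^ p.natDegree * F
  obtain ⟨h, hhI, hhs⟩ : ∃ h : A[X], h.map (Ideal.Quotient.mk I) = 0 ∧ aeval s h = aeval s G := by
    let φ := LinearMap.mulLeft A (s ^ p.natDegree * aeval (s ^ N) q)
    have hφ : LinearMap.range φ ≤ LinearMap.range (aeval s).toLinearMap := by
      rintro _ ⟨x, rfl⟩
      obtain ⟨g, hg⟩ := hqS x
      exact ⟨X ^ p.natDegree * g, by simp_all [φ]⟩
    refine exists_map_eq_zero_aeval_eq_of_mem_smul <| Submodule.smul_mono le_rfl hφ ?_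
    simpa [G, F, φ, mul_assoc, expand_aeval] using map_mem_smul_top_of_mem_map φ hs
  -- Reducing `h` modulo the integral equation of `s` brings its degree below that of `G`.
  refine ⟨G - h %ₘ p, p.natDegree + (n * N + N), ?_, ?_, ?_⟩
  · nontriviality A
    refine ((monic_X_pow _).mul hF).sub_of_left ((degree_modByMonic_lt h hp).trans_le ?_)
    rw [hF.degree_mul, degree_X_pow, degree_eq_natDegree hp.ne_zero]
    exact le_add_of_nonneg_right (zero_le_degree_iff.mpr hF.ne_zero)
  · simp only [G, F, Polynomial.map_sub, Polynomial.map_mul, Polynomial.map_pow, map_X, map_pow,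
      Polynomial.map_one, map_expand, expand_X, hqI, map_modByMonic _ hp, hhI, zero_modByMonic,
      sub_zero]
    ring
  · rw [map_sub, aeval_modByMonic_eq_self_of_root hps, hhs, sub_self]

end CayleyHamilton

section FiniteAlgebra

variable {A T B : Type*} [CommRing A] {I : Ideal A} [HenselianRing A I] [CommRing T] [Algebra A T]
  [Module.Finite A T] [CommRing B] [Algebra A B]

theorem exists_isUnit_algebraMap_eq_of_finite (hB : I.map (algebraMap A B) ≤ Ideal.jacobson ⊥)
    (f : T →ₐ[A] B) {s : T} {N : ℕ} (hN : N ≠ 0) (hs : s ^ N * (s - 1) ∈ I.map (algebraMap A T))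
    (hT : ∀ x, ∃ a : A, s ^ N * (x - algebraMap A T a) ∈ I.map (algebraMap A T))
    (hfs : f s - 1 ∈ I.map (algebraMap A B)) : ∃ a : A, IsUnit a ∧ algebraMap A B a = f s := by
  obtain ⟨P, n, hP, hPI, hPs⟩ := exists_monic_map_eq_aeval_eq_zero hN hs hT
  obtain ⟨a, ha, hab⟩ := exists_algebraMap_eq_of_aeval_eq_zero hB hP (a₀ := 1) (b := f s)
    (eval_one_mem_of_map_eq hPI) (by simp [mk_derivative_eval_one_of_map_eq hPI])
    (by rw [aeval_algHom_apply, hPs, map_zero]) (by rwa [map_one])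
  exact ⟨a, isUnit_of_sub_mem_of_le_jacobson_bot HenselianRing.jac isUnit_one
    (sub_mem_comm_iff.mp ha), hab⟩

theorem mem_range_algebraMap_of_finite (hB : I.map (algebraMap A B) ≤ Ideal.jacobson ⊥)
    (f : T →ₐ[A] B) {s : T} {N : ℕ} (hN : N ≠ 0) (hs : s ^ N * (s - 1) ∈ I.map (algebraMap A T))
    (hT : ∀ x, ∃ a : A, s ^ N * (x - algebraMap A T a) ∈ I.map (algebraMap A T))
    (hfs : f s - 1 ∈ I.map (algebraMap A B)) (x : T) : f x ∈ (algebraMap A B).range := by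
  obtain ⟨_, ⟨u, rfl⟩, hu⟩ := exists_isUnit_algebraMap_eq_of_finite hB f hN hs hT hfs
  have hle : LinearMap.range f.toLinearMap ≤ 1 ⊔ I • LinearMap.range f.toLinearMap := by
    rintro _ ⟨x, rfl⟩
    obtain ⟨a, ha⟩ := hT x
    have hsmul : u ^ N • (f x - algebraMap A B a) = f (s ^ N * (x - algebraMap A T a)) := by
      rw [Units.smul_def, Algebra.smul_def, Units.val_pow_eq_pow_val, map_pow, hu]
      simp
    have hmem : f x - algebraMap A B a ∈ I • LinearMap.range f.toLinearMap := by
      rw [← Submodule.smul_mem_iff' _ (u ^ N), hsmul]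
      exact map_mem_smul_top_of_mem_map f.toLinearMap ha
    exact add_sub_cancel (algebraMap A B a) (f x) ▸
      Submodule.add_mem_sup (Submodule.algebraMap_mem a) hmem
  have hfg : (LinearMap.range f.toLinearMap).FG :=
    Module.Finite.iff_fg.mp inferInstance
  exact Submodule.mem_one.mp <| Submodule.le_of_le_smul_of_le_jacobson_bot hfg
    HenselianRing.jac hle ⟨x, rfl⟩

end FiniteAlgebra

section ZariskisMainTheorem

variable {A R : Type*} [CommRing A] [CommRing R] [Algebra A R] {J : Ideal R}

/-- The ideal of those `s : S` for which `S[1/s] = R[1/s]`, that is, every `x : R` is multiplied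
into `S` by a power of `s` (see `mem_awayIdeal`). It is encoded as an intersection of radicals to
make it visibly an ideal. -/
def awayIdeal (S : Subalgebra A R) : Ideal S :=
  ⨅ x : R, Ideal.radical ((1 : Submodule S R).comap (LinearMap.toSpanSingleton S R x))

theorem mem_awayIdeal {S : Subalgebra A R} {s : S} :
    s ∈ awayIdeal S ↔ ∀ x : R, ∃ m : ℕ, (s : R) ^ m * x ∈ S := by
  simp [awayIdeal, Ideal.mem_radical_iff, Submodule.mem_one, Algebra.smul_def]

theorem zariskisMainProperty_of_surjective [Algebra.FiniteType A R] {I : Ideal A}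
    (hI : Function.Surjective (algebraMap A (R ⧸ I.map (algebraMap A R)))) {q : Ideal R}
    [q.IsPrime] (hq : I.map (algebraMap A R) ≤ q) :
    Algebra.ZariskisMainProperty A q := by
  have hle : I.map (algebraMap A R) ≤ (q.under A).map (algebraMap A R) :=
    Ideal.map_mono (Ideal.map_le_iff_le_comap.mp hq)
  have : Module.Finite A (R ⧸ (q.under A).map (algebraMap A R)) :=
    .of_surjective (Algebra.linearMap A _) <|
      (Ideal.Quotient.factor_surjective hle).comp hI
  have : Algebra.WeaklyQuasiFiniteAt A q := inferInstance
  exact .of_finiteType_of_weaklyQuasiFiniteAt ..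

theorem exists_sub_one_mem_of_zariskisMainProperty
    (hJ : Function.Surjective (algebraMap A (R ⧸ J)))
    (h : ∀ (q : Ideal R) [q.IsPrime], J ≤ q → Algebra.ZariskisMainProperty A q) :
    ∃ s ∈ awayIdeal (integralClosure A R), (s : R) - 1 ∈ J := by
  let π : integralClosure A R →+* R ⧸ J := (Ideal.Quotient.mk J).comp (algebraMap _ R)
  have hπ : Function.Surjective π := fun x ↦ by
    obtain ⟨a, rfl⟩ := hJ x
    exact ⟨algebraMap A _ a, rfl⟩
  have htop : (awayIdeal (integralClosure A R)).map π = ⊤ := by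
    by_contra hne
    obtain ⟨𝔪, h𝔪, hle⟩ := Ideal.exists_le_maximal _ hne
    let q := 𝔪.comap (Ideal.Quotient.mk J)
    have : 𝔪.IsPrime := h𝔪.isPrime
    obtain ⟨r, hrq, hr, hrx⟩ := Algebra.zariskisMainProperty_iff.mp
      (h q (Ideal.mk_ker.symm.trans_le (Ideal.ker_le_comap _)))
    exact hrq (hle (Ideal.mem_map_of_mem π (mem_awayIdeal (s := ⟨r, hr⟩).mpr hrx)))
  obtain ⟨s, hs, hs1⟩ := (Ideal.mem_map_iff_of_surjective π hπ).mp
    (htop ▸ Submodule.mem_top : (1 : R ⧸ J) ∈ _)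
  exact ⟨s, hs, Ideal.Quotient.eq.mp hs1⟩

theorem exists_finite_subalgebra_mem_awayIdeal [Algebra.FiniteType A R]
    {s : integralClosure A R} (hs : s ∈ awayIdeal (integralClosure A R)) :
    ∃ T : Subalgebra A R, Module.Finite A T ∧ ∃ t ∈ awayIdeal T, (t : R) = s := by
  obtain ⟨G, hG⟩ := Algebra.FiniteType.out (R := A) (A := R)
  choose m hm using mem_awayIdeal.mp hs
  let W : Set R := insert (s : R) ((fun x ↦ (s : R) ^ m x * x) '' G)
  have hsW : (s : R) ∈ Algebra.adjoin A W := Algebra.subset_adjoin (Set.mem_insert _ _)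
  have hfg : (Algebra.adjoin A W).toSubmodule.FG := by
    refine fg_adjoin_of_finite ((G.finite_toSet.image _).insert _) ?_
    rintro _ (rfl | ⟨x, -, rfl⟩)
    exacts [s.2, hm x]
  refine ⟨_, Module.Finite.iff_fg.mpr hfg, ⟨s, hsW⟩, mem_awayIdeal.mpr fun x ↦ ?_, rfl⟩
  have hx : x ∈ (Algebra.adjoin A W).saturation (.powers (s : R))
      (Submonoid.powers_le.mpr hsW) := by
    refine Algebra.adjoin_le (fun y hy ↦ ?_) (hG.ge (Algebra.mem_top : x ∈ ⊤))
    exact ⟨_, ⟨m y, rfl⟩, Algebra.subset_adjoin (Set.mem_insert_of_mem _ ⟨y, hy, rfl⟩)⟩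
  obtain ⟨_, ⟨k, rfl⟩, hk⟩ := hx
  exact ⟨k, hk⟩

variable {I : Ideal A} {T : Subalgebra A R} {s : T}

theorem exists_mem_map_coe_eq_pow_mul (hs : s ∈ awayIdeal T) {x : R}
    (hx : x ∈ I.map (algebraMap A R)) :
    ∃ m : ℕ, ∃ y ∈ I.map (algebraMap A T), (y : R) = s ^ m * x := by
  induction hx using Submodule.span_induction with
  | mem x hx =>
    obtain ⟨i, hi, rfl⟩ := hx
    exact ⟨0, algebraMap A T i, Ideal.mem_map_of_mem _ hi, by simp⟩
  | zero => exact ⟨0, 0, zero_mem _, by simp⟩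
  | add x₁ x₂ _ _ h₁ h₂ =>
    obtain ⟨m₁, y₁, hy₁, hyx₁⟩ := h₁
    obtain ⟨m₂, y₂, hy₂, hyx₂⟩ := h₂
    refine ⟨m₁ + m₂, s ^ m₂ * y₁ + s ^ m₁ * y₂,
      add_mem (Ideal.mul_mem_left _ _ hy₁) (Ideal.mul_mem_left _ _ hy₂), ?_⟩
    push_cast [hyx₁, hyx₂]
    ring
  | smul r x _ h =>
    obtain ⟨m, y, hy, hyx⟩ := h
    obtain ⟨k, hk⟩ := mem_awayIdeal.mp hs r
    refine ⟨k + m, ⟨_, hk⟩ * y, Ideal.mul_mem_left _ _ hy, ?_⟩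
    push_cast [hyx, smul_eq_mul]
    ring

theorem eventually_pow_mul_mem_map (hs : s ∈ awayIdeal T) {y : T}
    (hy : (y : R) ∈ I.map (algebraMap A R)) :
    ∀ᶠ N in Filter.atTop, s ^ N * y ∈ I.map (algebraMap A T) := by
  obtain ⟨m, z, hz, hzy⟩ := exists_mem_map_coe_eq_pow_mul hs hy
  filter_upwards [Filter.eventually_ge_atTop m] with N hN
  obtain rfl : z = s ^ m * y := Subtype.ext (by simpa using hzy)
  exact Ideal.mem_of_dvd _ (mul_dvd_mul_right (pow_dvd_pow s hN) y) hz

theorem eventually_forall_exists_pow_mul_sub_mem_map [Module.Finite A T] (hs : s ∈ awayIdeal T)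
    (hI : Function.Surjective (algebraMap A (R ⧸ I.map (algebraMap A R)))) :
    ∀ᶠ N in Filter.atTop, ∀ x, ∃ a : A,
      s ^ N * (x - algebraMap A T a) ∈ I.map (algebraMap A T) := by
  obtain ⟨G, hG⟩ := Module.Finite.fg_top (R := A) (M := T)
  let P (N : ℕ) : Submodule A T :=
    1 ⊔ ((I.map (algebraMap A T)).restrictScalars A).comap (LinearMap.mulLeft A (s ^ N))
  have hP (x : T) (N : ℕ) : x ∈ P N ↔
      ∃ a : A, s ^ N * (x - algebraMap A T a) ∈ I.map (algebraMap A T) := by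
    simp_rw [P, Submodule.mem_sup, Submodule.mem_one, exists_exists_eq_and, ← eq_sub_iff_add_eq',
      exists_eq_right]
    rfl
  have hGP : ∀ᶠ N in Filter.atTop, ∀ w ∈ G, w ∈ P N := by
    rw [Filter.eventually_all_finset]
    intro w _
    obtain ⟨a, ha⟩ := hI (Ideal.Quotient.mk _ w)
    have hwa : ((w - algebraMap A T a : T) : R) ∈ I.map (algebraMap A R) :=
      Ideal.Quotient.eq.mp ha.symm
    filter_upwards [eventually_pow_mul_mem_map hs hwa] with N hN
    exact (hP w N).mpr ⟨a, hN⟩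
  filter_upwards [hGP] with N hN x
  exact (hP x N).mp (Submodule.span_le.mpr hN (hG.ge Submodule.mem_top))

end ZariskisMainTheorem

theorem mem_range_algebraMap_of_finiteType {A R B : Type*} [CommRing A] [CommRing R] [CommRing B]
    [Algebra A R] [Algebra.FiniteType A R] [Algebra A B] {I : Ideal A} [HenselianRing A I]
    (hI : Function.Surjective (algebraMap A (R ⧸ I.map (algebraMap A R))))
    (hB : I.map (algebraMap A B) ≤ Ideal.jacobson ⊥) (f : R →ₐ[A] B) (x : R) :
    f x ∈ (algebraMap A B).range := by
  obtain ⟨s₀, hs₀, hs₀1⟩ := exists_sub_one_mem_of_zariskisMainProperty hI fun q _ hq ↦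
    zariskisMainProperty_of_surjective hI hq
  obtain ⟨T, _, s, hs, hss₀⟩ := exists_finite_subalgebra_mem_awayIdeal hs₀
  have hs1 : (s : R) - 1 ∈ I.map (algebraMap A R) := hss₀ ▸ hs₀1
  obtain ⟨N, hN, hsN, hTN⟩ := ((Filter.eventually_ne_atTop 0).and
    ((eventually_pow_mul_mem_map (y := s - 1) hs hs1).and
      (eventually_forall_exists_pow_mul_sub_mem_map hs hI))).exists
  have hfI : I.map (algebraMap A R) ≤ (I.map (algebraMap A B)).comap f :=
    Ideal.map_le_iff_le_comap.mpr fun i hi ↦ by simpa using Ideal.mem_map_of_mem _ hi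
  have hfs : (f.comp T.val) s - 1 ∈ I.map (algebraMap A B) := by simpa using hfI hs1
  obtain ⟨_, ⟨u, rfl⟩, hu⟩ :=
    exists_isUnit_algebraMap_eq_of_finite hB (f.comp T.val) hN hsN hTN hfs
  obtain ⟨m, hm⟩ := mem_awayIdeal.mp hs x
  obtain ⟨a, ha⟩ := mem_range_algebraMap_of_finite hB (f.comp T.val) hN hsN hTN hfs ⟨_, hm⟩
  have hua : algebraMap A B (u ^ m) * f x = algebraMap A B a := by
    rw [ha, map_pow, hu]
    simp
  refine ⟨↑(u ^ m)⁻¹ * a, ?_⟩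
  rw [map_mul, ← hua, ← mul_assoc, ← map_mul, ← Units.val_pow_eq_pow_val, Units.inv_mul, map_one,
    one_mul]

namespace IsHenselization

variable {R H : Type u} [CommRing R] [CommRing H] {K : Ideal R} {ρ : R →+* H}

theorem exists_comp_eq_mk (hρ : IsHenselization K ρ) :
    ∃ g : H →+* R ⧸ K, g.comp ρ = Ideal.Quotient.mk K :=
  (hρ.2 _ ⊥ henselianRing_bot (Ideal.Quotient.mk K) (Ideal.map_quotient_self K).le).exists

theorem subring_eq_top (hρ : IsHenselization K ρ) (S : Subring H) {J : Ideal S}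
    (hJ : HenselianRing S J) (hS : ∀ r, ρ r ∈ S) (hK : K.map (ρ.codRestrict S hS) ≤ J) :
    S = ⊤ := by
  obtain ⟨g, hg, -⟩ := hρ.2 S J hJ (ρ.codRestrict S hS) hK
  have hgρ : (S.subtype.comp g).comp ρ = ρ := by
    rw [RingHom.comp_assoc, hg]
    rfl
  have hid : S.subtype.comp g = RingHom.id H := (hρ.2 H _ hρ.1 ρ le_rfl).unique hgρ ρ.id_comp
  exact (Subring.eq_top_iff' S).mpr fun b ↦
    (show (g b : H) = b from RingHom.congr_fun hid b) ▸ (g b).2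

end IsHenselization

theorem surjective_algebraMap_quotient_of_isHenselization {A R B : Type u} [CommRing A] [CommRing R]
    [CommRing B] [Algebra A R] [Algebra A B] {I : Ideal A} {ρ : R →ₐ[A] B}
    (hρ : IsHenselization (I.map (algebraMap A R)) (ρ : R →+* B))
    (hsurj : Function.Surjective (Ideal.quotientMap (I.map (algebraMap A B)) (algebraMap A B)
      Ideal.le_comap_map)) :
    Function.Surjective (algebraMap A (R ⧸ I.map (algebraMap A R))) := by
  intro x
  obtain ⟨r, rfl⟩ := Ideal.Quotient.mk_surjective x
  obtain ⟨g, hg⟩ := hρ.exists_comp_eq_mk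
  have hgI : (I.map (algebraMap A B)).map g = ⊥ := by
    rw [← ρ.comp_algebraMap, ← Ideal.map_map, Ideal.map_map, hg, Ideal.map_quotient_self]
  obtain ⟨a, ha⟩ := hsurj (Ideal.Quotient.mk _ (ρ r))
  obtain ⟨a, rfl⟩ := Ideal.Quotient.mk_surjective a
  rw [Ideal.quotientMap_mk, Ideal.Quotient.eq] at ha
  have hga : g (algebraMap A B a) = g (ρ r) := by
    rw [← sub_eq_zero, ← map_sub, ← Ideal.mem_bot, ← hgI]
    exact Ideal.mem_map_of_mem g ha
  have hgρ (x : R) : g (ρ x) = Ideal.Quotient.mk _ x := RingHom.congr_fun hg x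
  rw [← ρ.commutes, hgρ, hgρ] at hga
  exact ⟨a, hga⟩

theorem surjective_of_isHfp_of_surjective_mod_general
    {A B R : Type u} [CommRing A] [CommRing B] [CommRing R] [Algebra A B]
    (I : Ideal A) [HenselianRing A I] {ψ : A →+* R} (hψ : ψ.FiniteType) {ρ : R →+* B}
    (hψρ : ρ.comp ψ = algebraMap A B) (hρ : IsHenselization (I.map ψ) ρ)
    (hsurj : Function.Surjective (Ideal.quotientMap (I.map (algebraMap A B)) (algebraMap A B)
      Ideal.le_comap_map)) :
    Function.Surjective (algebraMap A B) := by
  let _ : Algebra A R := ψ.toAlgebra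
  have : Algebra.FiniteType A R := hψ
  let ρA : R →ₐ[A] B := ⟨ρ, RingHom.congr_fun hψρ⟩
  have hI : I.map (algebraMap A B) = (I.map ψ).map ρ := by rw [Ideal.map_map, hψρ]
  have hIR : Function.Surjective (algebraMap A (R ⧸ I.map (algebraMap A R))) :=
    surjective_algebraMap_quotient_of_isHenselization (ρ := ρA) hρ hsurj
  have hrange (r : R) : ρ r ∈ (algebraMap A B).range :=
    mem_range_algebraMap_of_finiteType hIR (hI ▸ hρ.1.jac) ρA r
  have hHens := henselianRing_map_of_surjective (I := I)
    (algebraMap A B).rangeRestrict_surjective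
  rw [← RingHom.range_eq_top]
  refine hρ.subring_eq_top _ hHens hrange (le_of_eq ?_)
  rw [Ideal.map_map]
  congr 1
  ext a
  exact RingHom.congr_fun hψρ a

/-- If `B` is hfp over the Henselian pair `(A, I)` and `A/I → B/IB` is surjective, then
`A → B` is surjective. -/
theorem surjective_of_isHfp_of_surjective_mod
    {A B : Type u} [CommRing A] [CommRing B] [Algebra A B]
    (I : Ideal A) [HenselianRing A I]
    (hhfp : IsHfp (algebraMap A B) I)
    (hsurj : Function.Surjective (Ideal.quotientMap (I.map (algebraMap A B)) (algebraMap A B)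
      Ideal.le_comap_map)) :
    Function.Surjective (algebraMap A B) := by
  obtain ⟨R, _, ψ, ρ, hψ, hψρ, hρ⟩ := hhfp
  exact surjective_of_isHfp_of_surjective_mod_general I (.of_finitePresentation hψ) hψρ hρ hsurj
end

section
/- Let (A, I) be a Henselian pair and let B be an A-algebra which is hfp over A with respect to I. Then the map A → B is h-formally smooth if and only if for every integer r ≥ 1 the induced ring map A/I^r → B/(I^r·B) is smooth (smooth = formally smooth and of finite presentation). -/
universe u

/-!
An `A`-algebra killed by a power of `I` is an algebra over some `A / I ^ r`, and a map from `B` to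
it factors through `B / I ^ r B`. Hence h-formal smoothness of `A → B` is formal smoothness of all
the maps `A / I ^ r → B / I ^ r B`. Finite presentation of these maps is automatic for hfp `B`: a
nilpotent ideal forms a Henselian pair, so a ring in which `I` becomes nilpotent cannot tell `R`
from its Henselization `B`, and therefore `R / I ^ r R ≅ B / I ^ r B`.
-/

universe v

theorem exists_lift_of_formallySmooth {R S E C : Type*} [CommRing R] [CommRing S] [CommRing E]
    [CommRing C] {f : R →+* S} (hf : f.FormallySmooth) {p : E →+* C}
    (hp : Function.Surjective p) (hker : IsNilpotent (RingHom.ker p)) {e : R →+* E}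
    {u : S →+* C} (h : p.comp e = u.comp f) : ∃ v : S →+* E, v.comp f = e ∧ p.comp v = u := by
  algebraize [f, e, p.comp e]
  let p' : E →ₐ[R] C := { p with commutes' := fun _ ↦ rfl }
  let u' : S →ₐ[R] C := { u with commutes' := fun r ↦ (RingHom.congr_fun h r).symm }
  let v := Algebra.FormallySmooth.liftOfSurjective u' p' hp hker
  exact ⟨v, v.comp_algebraMap,
    RingHom.ext (Algebra.FormallySmooth.liftOfSurjective_apply u' p' hp hker)⟩

theorem formallySmooth_of_exists_lift {R : Type u} {S : Type v} [CommRing R] [CommRing S]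
    {f : R →+* S}
    (H : ∀ (E : Type max u v) [CommRing E] (K : Ideal E), K ^ 2 = ⊥ →
      ∀ (e : R →+* E) (u : S →+* E ⧸ K), (Ideal.Quotient.mk K).comp e = u.comp f →
        ∃ v : S →+* E, v.comp f = e ∧ (Ideal.Quotient.mk K).comp v = u) :
    f.FormallySmooth := by
  algebraize [f]
  refine Algebra.FormallySmooth.of_comp_surjective fun E _ _ K hK u ↦ ?_
  obtain ⟨v, hve, hvu⟩ := H E K hK (algebraMap R E) u u.comp_algebraMap.symm
  exact ⟨{ v with commutes' := RingHom.congr_fun hve }, AlgHom.ext (RingHom.congr_fun hvu)⟩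

theorem IsHFormallySmooth.formallySmooth_quotientMap {A B : Type u} [CommRing A] [CommRing B]
    {φ : A →+* B} {I J : Ideal A} (hφ : IsHFormallySmooth φ I) {n : ℕ} (hJ : I ^ n ≤ J) :
    (Ideal.quotientMap (J.map φ) φ Ideal.le_comap_map).FormallySmooth := by
  refine formallySmooth_of_exists_lift fun E _ K hK e u heu ↦ ?_
  let e' : A →+* E := e.comp (Ideal.Quotient.mk J)
  let u' : B →+* E ⧸ K := u.comp (Ideal.Quotient.mk (J.map φ))
  have hJe : J ≤ RingHom.ker e' := fun a ha ↦ by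
    simp [e', RingHom.mem_ker, Ideal.Quotient.eq_zero_iff_mem.mpr ha]
  have hIe : (I ^ (n + 1)).map e' = ⊥ :=
    (Ideal.map_eq_bot_iff_le_ker e').mpr ((Ideal.pow_le_pow_right n.le_succ).trans (hJ.trans hJe))
  have heu' : u'.comp φ = (Ideal.Quotient.mk K).comp e' :=
    RingHom.ext fun a ↦ (RingHom.congr_fun heu (Ideal.Quotient.mk J a)).symm
  obtain ⟨v, hve, hvu⟩ := hφ E (E ⧸ K) e' _ (Ideal.Quotient.mk K) u' rfl heu'
    ⟨n + 1, n.succ_pos, hIe, by rw [← Ideal.map_map, hIe, Ideal.map_bot]⟩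
    Ideal.Quotient.mk_surjective ⟨2, one_le_two, by rw [Ideal.mk_ker, hK]⟩
  have hJv : J.map φ ≤ RingHom.ker v := by
    rwa [Ideal.map_le_iff_le_comap, RingHom.comap_ker, hve]
  refine ⟨Ideal.Quotient.lift (J.map φ) v hJv, ?_, ?_⟩
  · exact Ideal.Quotient.ringHom_ext hve
  · exact Ideal.Quotient.ringHom_ext hvu

theorem isHFormallySmooth_of_formallySmooth_quotientMap {A B : Type u} [CommRing A] [CommRing B]
    {φ : A →+* B} {I : Ideal A}
    (hφ : ∀ r : ℕ, 1 ≤ r →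
      (Ideal.quotientMap ((I ^ r).map φ) φ Ideal.le_comap_map).FormallySmooth) :
    IsHFormallySmooth φ I := by
  rintro E C _ _ e c p u rfl huφ ⟨N, hN, heN, hcN⟩ hp ⟨M, -, hM⟩
  have he : I ^ N ≤ RingHom.ker e := (Ideal.map_eq_bot_iff_le_ker e).mp heN
  have hu : (I ^ N).map φ ≤ RingHom.ker u := by
    rw [← Ideal.map_eq_bot_iff_le_ker, Ideal.map_map, huφ, hcN]
  obtain ⟨v, hve, hvu⟩ := exists_lift_of_formallySmooth (hφ N hN) hp ⟨M, hM⟩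
    (e := Ideal.Quotient.lift (I ^ N) e he) (u := Ideal.Quotient.lift _ u hu)
    (Ideal.Quotient.ringHom_ext (RingHom.ext fun a ↦ (RingHom.congr_fun huφ a).symm))
  exact ⟨v.comp (Ideal.Quotient.mk _),
    RingHom.ext fun a ↦ RingHom.congr_fun hve (Ideal.Quotient.mk _ a),
    RingHom.ext fun b ↦ RingHom.congr_fun hvu (Ideal.Quotient.mk _ b)⟩

theorem finitePresentation_quotientMap {A R : Type*} [CommRing A] [CommRing R] {ψ : A →+* R}
    (hψ : ψ.FinitePresentation) (J : Ideal A) :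
    (Ideal.quotientMap (J.map ψ) ψ Ideal.le_comap_map).FinitePresentation := by
  algebraize [ψ]
  exact RingHom.finitePresentation_algebraMap.mpr
    (.equiv (Algebra.TensorProduct.quotIdealMapEquivQuotTensor R J).symm)

theorem isAdicComplete_of_isNilpotent {R M : Type*} [CommRing R] [AddCommGroup M] [Module R M]
    {I : Ideal R} (hI : IsNilpotent I) : IsAdicComplete I M := by
  obtain ⟨n, hn⟩ := hI
  have hbot {m : ℕ} (hm : n ≤ m) : I ^ m • (⊤ : Submodule R M) = ⊥ := by
    rw [pow_eq_zero_of_le hm hn, Ideal.zero_eq_bot, Submodule.bot_smul]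
  refine { haus' := fun x hx ↦ ?_, prec' := fun f hf ↦ ⟨f n, fun m ↦ ?_⟩ }
  · simpa only [hbot le_rfl, SModEq.bot] using hx n
  · rcases le_total m n with hmn | hnm
    · exact hf hmn
    · rw [hbot hnm, ← hbot le_rfl]
      exact (hf hnm).symm

section Henselization

variable {R H : Type u} [CommRing R] [CommRing H] {K : Ideal R} {ρ : R →+* H}

theorem IsHenselization.existsUnique_comp_eq_of_pow_le_ker (hρ : IsHenselization K ρ)
    {C : Type u} [CommRing C] {f : R →+* C} {n : ℕ} (hf : K ^ n ≤ RingHom.ker f) :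
    ∃! g : H →+* C, g.comp ρ = f := by
  have hnil : IsNilpotent (K.map f) :=
    ⟨n, by rwa [← Ideal.map_pow, Ideal.zero_eq_bot, Ideal.map_eq_bot_iff_le_ker]⟩
  have := isAdicComplete_of_isNilpotent (M := C) hnil
  exact hρ.2 C (K.map f) inferInstance f le_rfl

theorem IsHenselization.bijective_quotientMap (hρ : IsHenselization K ρ) {L : Ideal R}
    {L' : Ideal H} {n : ℕ} (hL : K ^ n ≤ L) (hL' : L.map ρ = L') :
    Function.Bijective (Ideal.quotientMap L' ρ (Ideal.map_le_iff_le_comap.mp hL'.le)) := by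
  subst hL'
  set ρL := Ideal.quotientMap (L.map ρ) ρ Ideal.le_comap_map
  obtain ⟨g, hg, -⟩ := hρ.existsUnique_comp_eq_of_pow_le_ker
    (f := Ideal.Quotient.mk L) (hL.trans_eq Ideal.mk_ker.symm)
  have hLg : L.map ρ ≤ RingHom.ker g := by
    rw [Ideal.map_le_iff_le_comap, RingHom.comap_ker, hg, Ideal.mk_ker]
  have hker : K ^ n ≤ RingHom.ker ((Ideal.Quotient.mk (L.map ρ)).comp ρ) := by
    rw [← RingHom.comap_ker, Ideal.mk_ker]
    exact hL.trans Ideal.le_comap_map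
  have hsection : ρL.comp g = Ideal.Quotient.mk (L.map ρ) :=
    (hρ.existsUnique_comp_eq_of_pow_le_ker hker).unique
      (by rw [RingHom.comp_assoc, hg, Ideal.quotientMap_comp_mk]) rfl
  refine Function.bijective_iff_has_inverse.mpr
    ⟨Ideal.Quotient.lift (L.map ρ) g hLg, ?_, ?_⟩
  · exact Ideal.Quotient.mk_surjective.forall.mpr (RingHom.congr_fun hg)
  · exact Ideal.Quotient.mk_surjective.forall.mpr (RingHom.congr_fun hsection)

end Henselization

theorem IsHfp.finitePresentation_quotientMap {A B : Type u} [CommRing A] [CommRing B]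
    {φ : A →+* B} {I J : Ideal A} (hφ : IsHfp φ I) {n : ℕ} (hJ : I ^ n ≤ J) :
    (Ideal.quotientMap (J.map φ) φ Ideal.le_comap_map).FinitePresentation := by
  obtain ⟨R, _, ψ, ρ, hψ, rfl, hρ⟩ := hφ
  have hpow : (I.map ψ) ^ n ≤ J.map ψ := by
    rw [← Ideal.map_pow]
    exact Ideal.map_mono hJ
  have hcomp : Ideal.quotientMap (J.map (ρ.comp ψ)) (ρ.comp ψ) Ideal.le_comap_map =
      (Ideal.quotientMap (J.map (ρ.comp ψ)) ρ
        (Ideal.map_le_iff_le_comap.mp (Ideal.map_map ψ ρ).le)).comp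
        (Ideal.quotientMap (J.map ψ) ψ Ideal.le_comap_map) :=
    Ideal.Quotient.ringHom_ext rfl
  rw [hcomp]
  exact (RingHom.FinitePresentation.of_bijective
    (hρ.bijective_quotientMap hpow (Ideal.map_map ψ ρ))).comp
      (_root_.finitePresentation_quotientMap hψ J)

theorem isHFormallySmooth_iff_smooth_mod_powers_general {A B : Type u} [CommRing A] [CommRing B]
    {φ : A →+* B} {I : Ideal A} (hφ : IsHfp φ I) :
    IsHFormallySmooth φ I ↔
      ∀ r : ℕ, 1 ≤ r →
        RingHomSmooth (Ideal.quotientMap ((I ^ r).map φ) φ Ideal.le_comap_map) := by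
  constructor
  · intro hsmooth r _
    exact RingHom.smooth_def.mpr
      ⟨hsmooth.formallySmooth_quotientMap le_rfl, hφ.finitePresentation_quotientMap le_rfl⟩
  · intro hsmooth
    exact isHFormallySmooth_of_formallySmooth_quotientMap fun r hr ↦
      (RingHom.smooth_def.mp (hsmooth r hr)).1

/-- For `B` hfp over the Henselian pair `(A, I)`, the map `A → B` is h-formally smooth iff
`A/I^r → B/I^r·B` is smooth for all `r ≥ 1`. -/
theorem isHFormallySmooth_iff_smooth_mod_powers
    {A B : Type u} [CommRing A] [CommRing B] [Algebra A B]
    (I : Ideal A) [HenselianRing A I]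
    (hhfp : IsHfp (algebraMap A B) I) :
    IsHFormallySmooth (algebraMap A B) I ↔
      ∀ r : ℕ, 1 ≤ r →
        RingHomSmooth (Ideal.quotientMap ((I ^ r).map (algebraMap A B)) (algebraMap A B)
          Ideal.le_comap_map) :=
  isHFormallySmooth_iff_smooth_mod_powers_general hhfp
end
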